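/- For a finite-dimensional algebra Λ over a field F, a finitely generated projective left Λ-module P, and any finitely generated left Λ-module M, there is an isomorphism of F-vector spaces Hom_Λ(P, M) ≅ Hom_Λ(M, νP)*, natural in both P and M, where ν = ( (-)^∨ )* is the Nakayama functor (Serre duality). -/

import Mathlib

section
variable (F Λ : Type) [Field F] [Ring Λ] [Algebra F Λ]

/-- The right action of `Λ` on the dual `P^∨ = Hom_Λ(P,Λ)`: `(f·a)(p) = f(p)a`. -/
def rsmul {P : Type} [AddCommGroup P] [Module Λ P] (a : Λ) (f : P →ₗ[Λ] Λ) :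
    P →ₗ[Λ] Λ where
  toFun p := f p * a
  map_add' p q := by simp [add_mul]
  map_smul' c p := by simp [mul_assoc]

/-- The Nakayama functor on objects: `νP = (P^∨)* = Hom_F(Hom_Λ(P,Λ), F)`. -/
abbrev Nu (P : Type) [AddCommGroup P] [Module Λ P] : Type :=
  (P →ₗ[Λ] Λ) →ₗ[F] F

/-- The subspace of `Hom_F(M, νP)` consisting of the `Λ`-linear maps `M → νP`,
where `νP` carries the left `Λ`-action `(a·ξ)(f) = ξ(f·a)`.  This is the
hom-space `Hom_Λ(M, νP)`. -/
def homNu (M P : Type) [AddCommGroup M] [Module Λ M] [Module F M]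
    [SMulCommClass Λ F M] [AddCommGroup P] [Module Λ P] :
    Submodule F (M →ₗ[F] Nu F Λ P) where
  carrier := {h | ∀ (a : Λ) (m : M) (f : P →ₗ[Λ] Λ), h (a • m) f = h m (rsmul Λ a f)}
  add_mem' := by
    intro h g hh hg a m f
    simp [hh a m f, hg a m f]
  zero_mem' := by intro a m f; simp
  smul_mem' := by
    intro c h hh a m f
    simp [hh a m f]

/-- The dual `p^∨ : P^∨ → P'^∨` of `p : P' → P`, as an `F`-linear map. -/
def dualMapP {P P' : Type} [AddCommGroup P] [Module Λ P] [AddCommGroup P']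
    [Module Λ P'] (p : P' →ₗ[Λ] P) : (P →ₗ[Λ] Λ) →ₗ[F] (P' →ₗ[Λ] Λ) where
  toFun g := g.comp p
  map_add' g h := by ext q; rfl
  map_smul' c g := by ext q; rfl

/-- The Nakayama functor on morphisms: `νp : νP' → νP` for `p : P' → P`. -/
def nuMap {P P' : Type} [AddCommGroup P] [Module Λ P] [AddCommGroup P']
    [Module Λ P'] (p : P' →ₗ[Λ] P) : Nu F Λ P' →ₗ[F] Nu F Λ P where
  toFun ξ := ξ.comp (dualMapP F Λ p)
  map_add' ξ ζ := by ext g; rfl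
  map_smul' c ξ := by ext g; rfl

end

section
variable (F Λ : Type) [Field F] [Ring Λ] [Algebra F Λ]

theorem exists_dual_basis (P : Type) [AddCommGroup P] [Module Λ P]
    (hP1 : Module.Finite Λ P) (hP2 : Module.Projective Λ P) :
    ∃ (n : ℕ) (b : Fin n → P) (φ : Fin n → P →ₗ[Λ] Λ), ∀ x, ∑ i, φ i x • b i = x := by
  obtain ⟨n, f, g, -, -, hfg⟩ := Module.Finite.exists_comp_eq_id_of_projective Λ P
  refine ⟨n, fun i => f (Pi.single i 1), fun i => LinearMap.proj i ∘ₗ g, fun x => ?_⟩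
  have h : f (g x) = x := LinearMap.congr_fun hfg x
  conv_rhs => rw [← h, pi_eq_sum_univ' (g x), map_sum]
  refine Finset.sum_congr rfl fun i _ => ?_
  rw [LinearMap.comp_apply, LinearMap.proj_apply, ← map_smul]

variable {P M : Type} [AddCommGroup P] [Module Λ P] [AddCommGroup M] [Module Λ M]
  [Module F M] [SMulCommClass Λ F M]

variable {F Λ}

/-- The trace pairing `(f, h) ↦ ∑ h (f bᵢ) φᵢ` attached to families `bᵢ ∈ P`, `φᵢ ∈ P^∨`. -/
def nakayamaPairing {n : ℕ} (b : Fin n → P) (φ : Fin n → P →ₗ[Λ] Λ) :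
    (P →ₗ[Λ] M) →ₗ[F] homNu F Λ M P →ₗ[F] F :=
  LinearMap.mk₂ F (fun f h => ∑ i, h.1 (f (b i)) (φ i))
    (by simp [Finset.sum_add_distrib])
    (by simp [Finset.mul_sum])
    (by simp [Finset.sum_add_distrib])
    (by simp [Finset.mul_sum])

theorem nakayamaPairing_apply {n : ℕ} (b : Fin n → P) (φ : Fin n → P →ₗ[Λ] Λ)
    (f : P →ₗ[Λ] M) (h : homNu F Λ M P) :
    nakayamaPairing b φ f h = ∑ i, h.1 (f (b i)) (φ i) := rfl

theorem sum_rsmul_dual_basis {n : ℕ} {b : Fin n → P} {φ : Fin n → P →ₗ[Λ] Λ}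
    (hb : ∀ x, ∑ i, φ i x • b i = x) (ψ : P →ₗ[Λ] Λ) :
    ∑ i, rsmul Λ (ψ (b i)) (φ i) = ψ := by
  ext x
  conv_rhs => rw [← hb x, map_sum]
  simp [rsmul]

theorem sum_smulRight_dual_basis {n : ℕ} {b : Fin n → P} {φ : Fin n → P →ₗ[Λ] Λ}
    (hb : ∀ x, ∑ i, φ i x • b i = x) (f : P →ₗ[Λ] M) :
    ∑ i, (φ i).smulRight (f (b i)) = f := by
  ext x
  conv_rhs => rw [← hb x, map_sum]
  simp

theorem nakayamaPairing_smulRight {n : ℕ} {b : Fin n → P} {φ : Fin n → P →ₗ[Λ] Λ}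
    (hb : ∀ x, ∑ i, φ i x • b i = x) (ψ : P →ₗ[Λ] Λ) (m : M) (h : homNu F Λ M P) :
    nakayamaPairing b φ (ψ.smulRight m) h = h.1 m ψ := by
  conv_rhs => rw [← sum_rsmul_dual_basis hb ψ, map_sum]
  rw [nakayamaPairing_apply]
  exact Finset.sum_congr rfl fun i _ => h.2 (ψ (b i)) m (φ i)

/-- The map `M → νP`, `m ↦ (ψ ↦ l (ψ(-) m))` attached to a functional `l` on `Hom_Λ(P, M)`. -/
def homNuOfDual [IsScalarTower F Λ M] (l : Module.Dual F (P →ₗ[Λ] M)) : homNu F Λ M P :=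
  ⟨LinearMap.mk₂ F (fun m ψ => l (ψ.smulRight m))
    (fun m m' ψ => by rw [← map_add]; congr 1; ext; simp)
    (fun c m ψ => by rw [← map_smul]; congr 1; ext; simp [smul_comm _ c])
    (fun m ψ ψ' => by rw [← map_add]; congr 1; ext; simp [add_smul])
    (fun c m ψ => by rw [← map_smul]; congr 1; ext; simp),
   fun a m ψ => congrArg l (by ext; simp [rsmul, mul_smul])⟩

theorem homNuOfDual_apply [IsScalarTower F Λ M] (l : Module.Dual F (P →ₗ[Λ] M)) (m : M)
    (ψ : P →ₗ[Λ] Λ) : (homNuOfDual l).1 m ψ = l (ψ.smulRight m) := rfl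

/-- A dual basis of `P` identifies `Hom_Λ(M, νP)` with the dual of `Hom_Λ(P, M)`. -/
def homNuEquivDual [IsScalarTower F Λ M] {n : ℕ} (b : Fin n → P) (φ : Fin n → P →ₗ[Λ] Λ)
    (hb : ∀ x, ∑ i, φ i x • b i = x) : homNu F Λ M P ≃ₗ[F] Module.Dual F (P →ₗ[Λ] M) where
  __ := (nakayamaPairing b φ).flip
  invFun := homNuOfDual
  left_inv h := by
    ext m ψ
    exact nakayamaPairing_smulRight hb ψ m h
  right_inv l := by
    ext f
    change nakayamaPairing b φ f (homNuOfDual l) = l f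
    simp only [nakayamaPairing_apply, homNuOfDual_apply]
    rw [← map_sum, sum_smulRight_dual_basis hb]

theorem finite_linearMap [FiniteDimensional F Λ] [IsScalarTower F Λ M] (hP : Module.Finite Λ P)
    (hM : Module.Finite Λ M) : Module.Finite F (P →ₗ[Λ] M) := by
  have : Module.Finite F M := Module.Finite.trans Λ M
  obtain ⟨n, b, hb⟩ := Module.Finite.exists_fin (R := Λ) (M := P)
  let ev : (P →ₗ[Λ] M) →ₗ[F] (Fin n → M) :=
    { toFun := fun f i => f (b i)
      map_add' := fun _ _ => rfl
      map_smul' := fun _ _ => rfl }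
  exact Module.Finite.of_injective ev fun f g h =>
    LinearMap.ext_on_range hb fun i => congrFun h i

/-- The trace pairing of a dual basis, as an isomorphism `Hom_Λ(P, M) ≅ Hom_Λ(M, νP)*`. -/
noncomputable def serreEquiv [FiniteDimensional F Λ] [IsScalarTower F Λ M]
    (hP : Module.Finite Λ P) (hM : Module.Finite Λ M) {n : ℕ} (b : Fin n → P)
    (φ : Fin n → P →ₗ[Λ] Λ) (hb : ∀ x, ∑ i, φ i x • b i = x) :
    (P →ₗ[Λ] M) ≃ₗ[F] (homNu F Λ M P →ₗ[F] F) :=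
  haveI := finite_linearMap (F := F) hP hM
  Module.evalEquiv F (P →ₗ[Λ] M) ≪≫ₗ (homNuEquivDual b φ hb).dualMap

theorem serreEquiv_apply [FiniteDimensional F Λ] [IsScalarTower F Λ M]
    (hP : Module.Finite Λ P) (hM : Module.Finite Λ M) {n : ℕ} (b : Fin n → P)
    (φ : Fin n → P →ₗ[Λ] Λ) (hb : ∀ x, ∑ i, φ i x • b i = x) (f : P →ₗ[Λ] M)
    (h : homNu F Λ M P) : serreEquiv hP hM b φ hb f h = ∑ i, h.1 (f (b i)) (φ i) := rfl

end

/-- Serre duality: For a finite-dimensional `F`-algebra `Λ`,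
a finitely generated projective left `Λ`-module `P` and a finitely generated
left `Λ`-module `M`, there is an `F`-linear isomorphism
`Hom_Λ(P,M) ≅ Hom_Λ(M, νP)*`, natural in both `P` and `M`, where
`ν = Hom_F(Hom_Λ(-,Λ), F)` is the Nakayama functor. -/
theorem stmt_4 (F Λ : Type) [Field F] [Ring Λ] [Algebra F Λ] [FiniteDimensional F Λ] :
    ∃ e : ∀ (P M : Type) [AddCommGroup P] [Module Λ P] [AddCommGroup M] [Module Λ M]
        [Module F M] [IsScalarTower F Λ M] [SMulCommClass Λ F M],
        Module.Finite Λ P → Module.Projective Λ P → Module.Finite Λ M →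
        ((P →ₗ[Λ] M) ≃ₗ[F] (↥(homNu F Λ M P) →ₗ[F] F)),
      -- naturality in M
      (∀ (P M M' : Type) [AddCommGroup P] [Module Λ P]
          [AddCommGroup M] [Module Λ M] [Module F M] [IsScalarTower F Λ M]
          [SMulCommClass Λ F M]
          [AddCommGroup M'] [Module Λ M'] [Module F M'] [IsScalarTower F Λ M']
          [SMulCommClass Λ F M']
          (hP1 : Module.Finite Λ P) (hP2 : Module.Projective Λ P)
          (hM : Module.Finite Λ M) (hM' : Module.Finite Λ M')
          (g : M →ₗ[Λ] M') (f : P →ₗ[Λ] M)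
          (k : M' →ₗ[F] Nu F Λ P) (hk : k ∈ homNu F Λ M' P)
          (hk2 : k.comp (g.restrictScalars F) ∈ homNu F Λ M P),
        e P M' hP1 hP2 hM' (g ∘ₗ f) ⟨k, hk⟩ =
          e P M hP1 hP2 hM f ⟨k.comp (g.restrictScalars F), hk2⟩) ∧
      -- naturality in P
      (∀ (P P' M : Type) [AddCommGroup P] [Module Λ P] [AddCommGroup P'] [Module Λ P']
          [AddCommGroup M] [Module Λ M] [Module F M] [IsScalarTower F Λ M]
          [SMulCommClass Λ F M]
          (hP1 : Module.Finite Λ P) (hP2 : Module.Projective Λ P)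
          (hP1' : Module.Finite Λ P') (hP2' : Module.Projective Λ P')
          (hM : Module.Finite Λ M)
          (p : P' →ₗ[Λ] P) (f : P →ₗ[Λ] M)
          (k : M →ₗ[F] Nu F Λ P') (hk : k ∈ homNu F Λ M P')
          (hk2 : (nuMap F Λ p).comp k ∈ homNu F Λ M P),
        e P M hP1 hP2 hM f ⟨(nuMap F Λ p).comp k, hk2⟩ =
          e P' M hP1' hP2' hM (f ∘ₗ p) ⟨k, hk⟩) := by
  choose n b φ hb using exists_dual_basis Λ
  refine ⟨fun P M _ _ _ _ _ _ _ hP1 hP2 hM =>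
    serreEquiv hP1 hM (b P hP1 hP2) (φ P hP1 hP2) (hb P hP1 hP2), ?_, ?_⟩
  · intros
    rfl
  · intro P P' M _ _ _ _ _ _ _ _ _ hP1 hP2 hP1' hP2' hM p f k hk hk2
    simp only [serreEquiv_apply]
    calc ∑ i, k (f (b P hP1 hP2 i)) (φ P hP1 hP2 i ∘ₗ p)
        = ∑ i, nakayamaPairing (b P' hP1' hP2') (φ P' hP1' hP2')
            ((φ P hP1 hP2 i ∘ₗ p).smulRight (f (b P hP1 hP2 i))) ⟨k, hk⟩ :=
          Finset.sum_congr rfl fun i _ =>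
            (nakayamaPairing_smulRight (hb P' hP1' hP2') _ _ ⟨k, hk⟩).symm
      _ = nakayamaPairing (b P' hP1' hP2') (φ P' hP1' hP2') (f ∘ₗ p) ⟨k, hk⟩ := by
          rw [← LinearMap.sum_apply, ← map_sum]
          congr 2
          ext x
          simpa using
            LinearMap.congr_fun (sum_smulRight_dual_basis (hb P hP1 hP2) f) (p x)
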